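/- There exists a positive real number λ such that (r₁, r₂, r₃, r₄, r₅, r₆, r₇, r₈) = λ·(1, c₁₁, c₆c₁₃, c₆c₁₄, c₁₂, c₁₁c₁₂, c₁₃, c₁₄); equivalently, b = a·c₁₁, c = a·c₆·c₁₃, d = a·c₆·c₁₄, and c₉ = c₃·c₁₂, so that the amplitudes r₁,…,r₈ may be replaced by (1, c₁₁, c₆c₁₃, c₆c₁₄, c₁₂, c₁₁c₁₂, c₁₃, c₁₄) up to an overall positive scale factor. -/

import Mathlib

noncomputable section
open Real Complex

namespace Triacontagonal

/-- The golden ratio. -/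
def τ : ℝ := (1 + Real.sqrt 5) / 2

/-- The constant 3^(-1/2) * 5^(-1/4). -/
def k0 : ℝ := (3 : ℝ) ^ (-(1:ℝ)/2) * (5 : ℝ) ^ (-(1:ℝ)/4)

/-- `a` is the positive real with 2a² = 1 + 3^(-1/2)·5^(-1/4)·τ^(3/2). -/
def a : ℝ := Real.sqrt ((1 + k0 * τ ^ ((3:ℝ)/2)) / 2)

/-- `b` is the positive real with 2b² = 1 + 3^(-1/2)·5^(-1/4)·τ^(-3/2). -/
def b : ℝ := Real.sqrt ((1 + k0 * τ ^ (-((3:ℝ)/2))) / 2)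

/-- `c` is the positive real with 2c² = 1 - 3^(-1/2)·5^(-1/4)·τ^(-3/2). -/
def c : ℝ := Real.sqrt ((1 - k0 * τ ^ (-((3:ℝ)/2))) / 2)

/-- `d` is the positive real with 2d² = 1 - 3^(-1/2)·5^(-1/4)·τ^(3/2). -/
def d : ℝ := Real.sqrt ((1 - k0 * τ ^ ((3:ℝ)/2)) / 2)

/-- `cc n = 2 cos(nπ/30)`. -/
def cc (n : ℤ) : ℝ := 2 * Real.cos (n * Real.pi / 30)

def r1 : ℝ := a / cc 9
def r2 : ℝ := b / cc 9
def r3 : ℝ := c / cc 9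
def r4 : ℝ := d / cc 9
def r5 : ℝ := a / cc 3
def r6 : ℝ := b / cc 3
def r7 : ℝ := c / cc 3
def r8 : ℝ := d / cc 3

/-!
The identity `cc m * cc n = cc (m + n) + cc (m - n)` governs all products of the `cc n`. The radical
expressions are quotients of such numbers: `k0 * τ ^ (3/2) = tan (π/6) / tan (π/5)` and
`k0 * τ ^ (-3/2) = tan (π/6) / tan (2π/5)`, that is `cc 6 / (cc 5 * cc 9)` and
`cc 12 / (cc 5 * cc 3)`. The addition formulas then give `a ^ 2 = cc 4 / (cc 5 * cc 9)` and similar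
quotients for `b ^ 2`, `c ^ 2`, `d ^ 2`, so that each asserted ratio, once squared, is a polynomial
identity between the `cc n`.
-/

lemma cc_mul_cc (m n : ℤ) : cc m * cc n = cc (m + n) + cc (m - n) := by
  unfold cc
  push_cast
  rw [add_mul, sub_mul, add_div, sub_div, Real.cos_add, Real.cos_sub]
  ring

lemma cc_zero : cc 0 = 2 := by
  simp [cc]

lemma cc_sq (n : ℤ) : cc n ^ 2 = cc (2 * n) + 2 := by
  rw [sq, cc_mul_cc, sub_self, cc_zero, two_mul]

lemma cc_thirty_sub (n : ℤ) : cc (30 - n) = -cc n := by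
  have angle : ((30 - n : ℤ) : ℝ) * π / 30 = π - n * π / 30 := by push_cast; ring
  rw [cc, cc, angle, Real.cos_pi_sub, mul_neg]

lemma cc_pos {n : ℤ} (hlower : -15 < n) (hupper : n < 15) : 0 < cc n := by
  have hlower' : (-15 : ℝ) < n := by exact_mod_cast hlower
  have hupper' : (n : ℝ) < 15 := by exact_mod_cast hupper
  refine mul_pos two_pos (Real.cos_pos_of_mem_Ioo ⟨?_, ?_⟩) <;> nlinarith [Real.pi_pos]

lemma cc_ten : cc 10 = 1 := by
  have angle : ((10 : ℤ) : ℝ) * π / 30 = π / 3 := by push_cast; ring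
  rw [cc, angle, Real.cos_pi_div_three]
  norm_num

lemma cc_fifteen : cc 15 = 0 := by
  have reflection : cc 15 = -cc 15 := cc_thirty_sub 15
  linarith

lemma cc_ten_add_add_cc_ten_sub (n : ℤ) : cc (10 + n) + cc (10 - n) = cc n := by
  rw [← cc_mul_cc, cc_ten, one_mul]

lemma cc_five_sq : cc 5 ^ 2 = 3 := by
  have double : cc 5 ^ 2 = cc 10 + 2 := cc_sq 5
  rw [double, cc_ten]
  norm_num

lemma cc_six : cc 6 = τ := by
  have angle : ((6 : ℤ) : ℝ) * π / 30 = π / 5 := by push_cast; ring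
  rw [cc, angle, Real.cos_pi_div_five, τ]
  ring

lemma tau_sq : τ ^ 2 = τ + 1 := Real.goldenRatio_sq

lemma tau_pos : 0 < τ := Real.goldenRatio_pos

lemma cc_twelve : cc 12 = τ - 1 := by
  have double : cc 6 ^ 2 = cc 12 + 2 := cc_sq 6
  rw [cc_six, tau_sq] at double
  linarith

lemma cc_six_mul_cc_twelve : cc 6 * cc 12 = 1 := by
  rw [cc_six, cc_twelve]
  linear_combination tau_sq

lemma cc_nine_eq : cc 9 = cc 3 * cc 12 := by
  have product : cc 12 * cc 3 = cc 15 + cc 9 := cc_mul_cc 12 3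
  linarith [cc_fifteen]

lemma cc_six_mul_cc_nine_sq : cc 6 * cc 9 ^ 2 = √5 := by
  have double : cc 9 ^ 2 = cc 18 + 2 := cc_sq 9
  have reflection : cc 18 = -cc 12 := cc_thirty_sub 12
  calc cc 6 * cc 9 ^ 2 = 2 * cc 6 - cc 6 * cc 12 := by rw [double, reflection]; ring
    _ = √5 := by rw [cc_six_mul_cc_twelve, cc_six, τ]; ring

lemma k0_sq : k0 ^ 2 = 1 / (3 * √5) := by
  have three : ((3 : ℝ) ^ (-(1 : ℝ) / 2)) ^ 2 = 3⁻¹ := by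
    rw [← Real.rpow_mul_natCast (by norm_num), ← Real.rpow_neg_one]
    norm_num
  have five : ((5 : ℝ) ^ (-(1 : ℝ) / 4)) ^ 2 = (√5)⁻¹ := by
    rw [← Real.rpow_mul_natCast (by norm_num), Real.sqrt_eq_rpow, ← Real.rpow_neg (by norm_num)]
    norm_num
  rw [k0, mul_pow, three, five, one_div, mul_inv]

lemma k0_mul_tau_rpow : k0 * τ ^ ((3 : ℝ) / 2) = cc 6 / (cc 5 * cc 9) := by
  have h5 : 0 < cc 5 := cc_pos (by norm_num) (by norm_num)
  have h6 : 0 < cc 6 := cc_pos (by norm_num) (by norm_num)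
  have h9 : 0 < cc 9 := cc_pos (by norm_num) (by norm_num)
  have tau_rpow_sq : (τ ^ ((3 : ℝ) / 2)) ^ 2 = cc 6 ^ 3 := by
    rw [cc_six, ← Real.rpow_mul_natCast tau_pos.le, ← Real.rpow_natCast]
    norm_num
  have lhs_nonneg : 0 ≤ k0 * τ ^ ((3 : ℝ) / 2) := by
    have := tau_pos
    unfold k0
    positivity
  rw [← sq_eq_sq₀ lhs_nonneg (by positivity), mul_pow, k0_sq, tau_rpow_sq, div_pow, mul_pow,
    cc_five_sq, ← cc_six_mul_cc_nine_sq]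
  field_simp

lemma k0_mul_tau_rpow_neg : k0 * τ ^ (-((3 : ℝ) / 2)) = cc 12 / (cc 5 * cc 3) := by
  have h3 : cc 3 ≠ 0 := (cc_pos (by norm_num) (by norm_num)).ne'
  have h5 : cc 5 ≠ 0 := (cc_pos (by norm_num) (by norm_num)).ne'
  have h12 : cc 12 ≠ 0 := (cc_pos (by norm_num) (by norm_num)).ne'
  have tau_inv : τ⁻¹ = cc 12 :=
    inv_eq_of_mul_eq_one_right (cc_six ▸ cc_six_mul_cc_twelve)
  have tau_rpow_neg : τ ^ (-((3 : ℝ) / 2)) = τ ^ ((3 : ℝ) / 2) * cc 12 ^ 3 := by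
    rw [← tau_inv, inv_pow, ← div_eq_mul_inv, ← Real.rpow_sub_natCast tau_pos.ne']
    norm_num
  calc k0 * τ ^ (-((3 : ℝ) / 2)) = cc 6 / (cc 5 * cc 9) * cc 12 ^ 3 := by
        rw [tau_rpow_neg, ← mul_assoc, k0_mul_tau_rpow]
    _ = (cc 6 * cc 12) * cc 12 / (cc 5 * cc 3) := by rw [cc_nine_eq]; field_simp
    _ = cc 12 / (cc 5 * cc 3) := by rw [cc_six_mul_cc_twelve, one_mul]

lemma cc_five_mul_cc_nine : cc 5 * cc 9 = cc 14 + cc 4 :=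
  (mul_comm _ _).trans (cc_mul_cc 9 5)

lemma cc_five_mul_cc_three : cc 5 * cc 3 = cc 8 + cc 2 :=
  cc_mul_cc 5 3

lemma cc_fourteen_add_cc_six : cc 14 + cc 6 = cc 4 :=
  cc_ten_add_add_cc_ten_sub 4

lemma cc_twelve_add_cc_eight : cc 12 + cc 8 = cc 2 :=
  cc_ten_add_add_cc_ten_sub 2

lemma cc_five_mul_cc_nine_pos : 0 < cc 5 * cc 9 :=
  mul_pos (cc_pos (by norm_num) (by norm_num)) (cc_pos (by norm_num) (by norm_num))

lemma cc_five_mul_cc_three_pos : 0 < cc 5 * cc 3 :=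
  mul_pos (cc_pos (by norm_num) (by norm_num)) (cc_pos (by norm_num) (by norm_num))

lemma a_eq_sqrt : a = √(cc 4 / (cc 5 * cc 9)) := by
  have hne := cc_five_mul_cc_nine_pos.ne'
  rw [a, k0_mul_tau_rpow, one_add_div hne, div_right_comm]
  congr 2
  linarith [cc_five_mul_cc_nine, cc_fourteen_add_cc_six]

lemma b_eq_sqrt : b = √(cc 2 / (cc 5 * cc 3)) := by
  have hne := cc_five_mul_cc_three_pos.ne'
  rw [b, k0_mul_tau_rpow_neg, one_add_div hne, div_right_comm]
  congr 2
  linarith [cc_five_mul_cc_three, cc_twelve_add_cc_eight]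

lemma c_eq_sqrt : c = √(cc 8 / (cc 5 * cc 3)) := by
  have hne := cc_five_mul_cc_three_pos.ne'
  rw [c, k0_mul_tau_rpow_neg, one_sub_div hne, div_right_comm]
  congr 2
  linarith [cc_five_mul_cc_three, cc_twelve_add_cc_eight]

lemma d_eq_sqrt : d = √(cc 14 / (cc 5 * cc 9)) := by
  have hne := cc_five_mul_cc_nine_pos.ne'
  rw [d, k0_mul_tau_rpow, one_sub_div hne, div_right_comm]
  congr 2
  linarith [cc_five_mul_cc_nine, cc_fourteen_add_cc_six]

lemma a_pos : 0 < a := by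
  rw [a_eq_sqrt]
  exact Real.sqrt_pos.2 (div_pos (cc_pos (by norm_num) (by norm_num)) cc_five_mul_cc_nine_pos)

lemma cc_four_mul_cc_eleven_sq : cc 4 * cc 11 ^ 2 = cc 2 * cc 12 := by
  have double : cc 11 ^ 2 = cc 22 + 2 := cc_sq 11
  have reflection : cc 22 = -cc 8 := cc_thirty_sub 8
  have product_four : cc 8 * cc 4 = cc 12 + cc 4 := cc_mul_cc 8 4
  have product_two : cc 12 * cc 2 = cc 14 + cc 10 := cc_mul_cc 12 2
  rw [double, reflection]
  linarith [cc_ten, cc_six, cc_twelve, cc_fourteen_add_cc_six]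

lemma cc_four_mul_cc_six_mul_cc_thirteen_sq : cc 4 * (cc 6 * cc 13) ^ 2 = cc 8 * cc 12 := by
  have double_four : cc 4 ^ 2 = cc 8 + 2 := cc_sq 4
  have double_six : cc 6 ^ 2 = cc 12 + 2 := cc_sq 6
  have double_thirteen : cc 13 ^ 2 = cc 26 + 2 := cc_sq 13
  have reflection_sixteen : cc 16 = -cc 14 := cc_thirty_sub 14
  have reflection_twenty : cc 20 = -cc 10 := cc_thirty_sub 10
  have reflection_twentySix : cc 26 = -cc 4 := cc_thirty_sub 4
  have product_four : cc 12 * cc 4 = cc 16 + cc 8 := cc_mul_cc 12 4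
  have product_eight : cc 12 * cc 8 = cc 20 + cc 4 := cc_mul_cc 12 8
  calc cc 4 * (cc 6 * cc 13) ^ 2 = (cc 12 + 2) * (2 * cc 4 - cc 4 ^ 2) := by
        rw [mul_pow, double_six, double_thirteen, reflection_twentySix]; ring
    _ = 2 * (cc 12 * cc 4) - cc 12 * cc 8 - 2 * cc 12 + 4 * cc 4 - 2 * cc 8 - 4 := by
        rw [double_four]; ring
    _ = cc 8 * cc 12 := by linarith [cc_ten, cc_six, cc_twelve, cc_fourteen_add_cc_six]

lemma cc_four_mul_cc_six_sq_mul_cc_fourteen : cc 4 * cc 6 ^ 2 * cc 14 = 1 := by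
  have product : cc 14 * cc 4 = cc 18 + cc 10 := cc_mul_cc 14 4
  have reflection : cc 18 = -cc 12 := cc_thirty_sub 12
  calc cc 4 * cc 6 ^ 2 * cc 14 = cc 6 ^ 2 * (cc 14 * cc 4) := by ring
    _ = τ ^ 2 * (2 - τ) := by rw [product, reflection, cc_ten, cc_twelve, cc_six]; ring
    _ = 1 := by linear_combination (1 - τ) * tau_sq

lemma b_eq_a_mul : b = a * cc 11 := by
  have h3 : cc 3 ≠ 0 := (cc_pos (by norm_num) (by norm_num)).ne'
  have h12 : cc 12 ≠ 0 := (cc_pos (by norm_num) (by norm_num)).ne'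
  have radicand_eq : cc 2 / (cc 5 * cc 3) = cc 4 / (cc 5 * cc 9) * cc 11 ^ 2 := by
    rw [div_mul_eq_mul_div, cc_four_mul_cc_eleven_sq, cc_nine_eq]
    field_simp
  rw [b_eq_sqrt, a_eq_sqrt, radicand_eq, Real.sqrt_mul' _ (sq_nonneg _),
    Real.sqrt_sq (cc_pos (by norm_num) (by norm_num)).le]

lemma c_eq_a_mul : c = a * cc 6 * cc 13 := by
  have h3 : cc 3 ≠ 0 := (cc_pos (by norm_num) (by norm_num)).ne'
  have h6 : 0 < cc 6 := cc_pos (by norm_num) (by norm_num)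
  have h12 : cc 12 ≠ 0 := (cc_pos (by norm_num) (by norm_num)).ne'
  have h13 : 0 < cc 13 := cc_pos (by norm_num) (by norm_num)
  have radicand_eq : cc 8 / (cc 5 * cc 3) = cc 4 / (cc 5 * cc 9) * (cc 6 * cc 13) ^ 2 := by
    rw [div_mul_eq_mul_div, cc_four_mul_cc_six_mul_cc_thirteen_sq, cc_nine_eq]
    field_simp
  rw [c_eq_sqrt, a_eq_sqrt, radicand_eq, Real.sqrt_mul' _ (sq_nonneg _),
    Real.sqrt_sq (mul_pos h6 h13).le, mul_assoc]

lemma d_eq_a_mul : d = a * cc 6 * cc 14 := by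
  have h6 : 0 < cc 6 := cc_pos (by norm_num) (by norm_num)
  have h14 : 0 < cc 14 := cc_pos (by norm_num) (by norm_num)
  have radicand_eq : cc 14 / (cc 5 * cc 9) = cc 4 / (cc 5 * cc 9) * (cc 6 * cc 14) ^ 2 := by
    linear_combination
      -(cc 14 / (cc 5 * cc 9)) * cc_four_mul_cc_six_sq_mul_cc_fourteen
  rw [d_eq_sqrt, a_eq_sqrt, radicand_eq, Real.sqrt_mul' _ (sq_nonneg _),
    Real.sqrt_sq (mul_pos h6 h14).le, mul_assoc]

lemma div_cc_three (x : ℝ) : x / cc 3 = x / cc 9 * cc 12 := by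
  have h12 : cc 12 ≠ 0 := (cc_pos (by norm_num) (by norm_num)).ne'
  rw [cc_nine_eq, div_mul_eq_mul_div, mul_div_mul_right _ _ h12]

/-- (r₁,…,r₈) = λ·(1, c₁₁, c₆c₁₃, c₆c₁₄, c₁₂, c₁₁c₁₂, c₁₃, c₁₄) for some
λ > 0; equivalently b = a·c₁₁, c = a·c₆·c₁₃, d = a·c₆·c₁₄ and c₉ = c₃·c₁₂. -/
theorem stmt14 :
    (∃ lam : ℝ, 0 < lam ∧
      r1 = lam * 1 ∧ r2 = lam * cc 11 ∧ r3 = lam * (cc 6 * cc 13) ∧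
      r4 = lam * (cc 6 * cc 14) ∧ r5 = lam * cc 12 ∧ r6 = lam * (cc 11 * cc 12) ∧
      r7 = lam * cc 13 ∧ r8 = lam * cc 14) ∧
    b = a * cc 11 ∧ c = a * cc 6 * cc 13 ∧ d = a * cc 6 * cc 14 ∧
    cc 9 = cc 3 * cc 12 := by
  have scale_pos : 0 < a / cc 9 := div_pos a_pos (cc_pos (by norm_num) (by norm_num))
  refine ⟨⟨a / cc 9, scale_pos, ?_⟩, b_eq_a_mul, c_eq_a_mul, d_eq_a_mul, cc_nine_eq⟩
  refine ⟨(mul_one _).symm, ?_, ?_, ?_, div_cc_three a, ?_, ?_, ?_⟩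
  · rw [r2, b_eq_a_mul]; ring
  · rw [r3, c_eq_a_mul]; ring
  · rw [r4, d_eq_a_mul]; ring
  · rw [r6, div_cc_three, b_eq_a_mul]; ring
  · rw [r7, div_cc_three, c_eq_a_mul]
    linear_combination a / cc 9 * cc 13 * cc_six_mul_cc_twelve
  · rw [r8, div_cc_three, d_eq_a_mul]
    linear_combination a / cc 9 * cc 14 * cc_six_mul_cc_twelve

end Triacontagonal
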